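/- Let S = G ∪ N be a finite elementary semigroup, let T₂ be a nonempty sequence over N with σ(T₂) ≠ ∞_S, and let K = {g ∈ G : g + σ(T₂) = σ(T₂)} be the stabilizer of σ(T₂) in G. Then D(S) ≥ |T₂| + D(G/K), where G/K is the quotient group and D(G/K) its Davenport constant. -/

import Mathlib

namespace EGZ

variable {S : Type}

/-- `rep a n = (n+1)·a`, the (n+1)-fold sum of `a` with itself (defined for semigroups,
where the 0-fold sum is unavailable). -/
def rep [AddCommSemigroup S] (a : S) : ℕ → S
  | 0 => a
  | n + 1 => rep a n + a

/-- The sum of all terms of a sequence (= multiset) over the semigroup `S`, computed in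
`WithZero S` (i.e. `S` with an extra identity element `0` adjoined); the empty sequence
has sum `0`, and a nonempty sequence has sum `↑s` where `s ∈ S` is its genuine sum. -/
def mSum [AddCommSemigroup S] (T : Multiset S) : WithZero S :=
  (T.map (fun s => (s : WithZero S))).sum

/-- `σ(A) = σ(B)`, with the paper's convention: the empty sequence is regarded as having
sum equal to the identity element `e` of `S`, whenever `S` has an identity element. -/
def EqSum [AddCommSemigroup S] (A B : Multiset S) : Prop :=
  mSum A = mSum B ∨
    ∃ e : S, (∀ a : S, e + a = a) ∧
      ((mSum A = 0 ∧ mSum B = (e : WithZero S)) ∨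
        (mSum A = (e : WithZero S) ∧ mSum B = 0))

/-- A sequence `T` over `S` is reducible if some proper subsequence `B` of `T`
satisfies `σ(B) = σ(T)`. -/
def Reducible [AddCommSemigroup S] (T : Multiset S) : Prop :=
  ∃ B : Multiset S, B < T ∧ EqSum B T

/-- The (large) Davenport constant `D(S)`: the smallest `ℓ` such that every sequence over
`S` of length at least `ℓ` is reducible. -/
noncomputable def DavC (S : Type) [AddCommSemigroup S] : ℕ :=
  sInf {ℓ : ℕ | ∀ T : Multiset S, ℓ ≤ Multiset.card T → Reducible T}

/-- The property defining the small Davenport constant: `ℓ` is admissible if for every `m`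
and every `c₁, …, c_m ∈ S` there is `J ⊆ [1, m]` with `|J| ≤ ℓ` and `Σ_{j=1}^m c_j = Σ_{j∈J} c_j`. -/
def SmallDavProp (S : Type) [AddCommSemigroup S] (ℓ : ℕ) : Prop :=
  ∀ (m : ℕ) (c : Fin m → S), ∃ J : Finset (Fin m),
    J.card ≤ ℓ ∧ EqSum (J.val.map c) ((Finset.univ : Finset (Fin m)).val.map c)

/-- The small Davenport constant `d(S)`. -/
noncomputable def smallDavC (S : Type) [AddCommSemigroup S] : ℕ :=
  sInf {ℓ : ℕ | SmallDavProp S ℓ}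

/-- The period of an element `a ∈ S`: the least `t > 0` such that `r·a = (r+t)·a`
for some `r > 0`. -/
noncomputable def period [AddCommSemigroup S] (a : S) : ℕ :=
  sInf {t : ℕ | 0 < t ∧ ∃ k : ℕ, rep a (k + t) = rep a k}

/-- `exp(S)`: the least common multiple of the periods of all elements of `S`. -/
noncomputable def expS (S : Type) [AddCommSemigroup S] [Fintype S] : ℕ :=
  (Finset.univ : Finset S).lcm (fun a => period a)

/-- `κ(S) = ⌈|S| / exp(S)⌉ · exp(S)`. -/
noncomputable def kappa (S : Type) [AddCommSemigroup S] [Fintype S] : ℕ :=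
  ((Fintype.card S + expS S - 1) / expS S) * expS S

/-- `E(S)`: the smallest positive integer `ℓ` such that every sequence `T` over `S` of
length at least `ℓ` contains a subsequence `T'` with `|T| - |T'| = κ(S)` and `σ(T') = σ(T)`. -/
noncomputable def EC (S : Type) [AddCommSemigroup S] [Fintype S] : ℕ :=
  sInf {ℓ : ℕ | 0 < ℓ ∧ ∀ T : Multiset S, ℓ ≤ Multiset.card T →
    ∃ B : Multiset S, B ≤ T ∧ Multiset.card T - Multiset.card B = kappa S ∧ EqSum B T}

end EGZ

/-- A finite commutative semigroup `S` is elementary with respect to subsets `G` and `N`: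
`S` is the disjoint union of `G` and `N`; `G` is (under the addition of `S`) an abelian
group whose identity element is an identity element of all of `S`; `N` is an ideal of `S`
and is a nilsemigroup whose zero element `z` is a zero element of all of `S`. -/
def IsElementary (S : Type) [AddCommSemigroup S] (G N : Set S) : Prop :=
  (∀ x : S, x ∈ G ∨ x ∈ N) ∧ Disjoint G N ∧
  (∀ a ∈ G, ∀ b ∈ G, a + b ∈ G) ∧
  (∃ e ∈ G, (∀ a : S, e + a = a) ∧ ∀ a ∈ G, ∃ b ∈ G, a + b = e) ∧
  (∀ a ∈ N, ∀ s : S, a + s ∈ N) ∧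
  (∃ z ∈ N, (∀ a : S, z + a = z) ∧ ∀ x ∈ N, ∃ n : ℕ, EGZ.rep x n = z)

namespace EGZ

theorem mSum_add' {S : Type} [AddCommSemigroup S] (A B : Multiset S) :
    mSum (A + B) = mSum A + mSum B := by
  simp [mSum]

theorem mSum_zero' {S : Type} [AddCommSemigroup S] : mSum (0 : Multiset S) = 0 := by
  simp [mSum]

theorem mSum_mem {S : Type} [AddCommSemigroup S] (P : Set S)
    (hP : ∀ a ∈ P, ∀ b ∈ P, a + b ∈ P) (X : Multiset S) :
    (∀ x ∈ X, x ∈ P) → X = 0 ∨ ∃ g ∈ P, mSum X = (g : WithZero S) := by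
  induction X using Multiset.induction_on with
  | empty => intro _; exact Or.inl rfl
  | cons a X ih =>
    intro h
    right
    have ha : a ∈ P := h a (Multiset.mem_cons_self a X)
    rcases ih (fun x hx => h x (Multiset.mem_cons_of_mem hx)) with h0 | ⟨g, hg, hs⟩
    · subst h0
      exact ⟨a, ha, by simp [mSum]⟩
    · refine ⟨a + g, hP a ha g hg, ?_⟩
      have : mSum (a ::ₘ X) = (a : WithZero S) + mSum X := by simp [mSum]
      rw [this, hs, WithZero.coe_add]

theorem reducible_of_card {S : Type} [AddCommSemigroup S] [Fintype S] (T : Multiset S)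
    (hT : Fintype.card S + 1 ≤ Multiset.card T) : Reducible T := by
  classical
  induction T using Quotient.inductionOn with
  | h l =>
  change _ ≤ l.length at hT
  let f : Fin (l.length + 1) → Option S := fun i => mSum (↑(l.take i) : Multiset S)
  have hc : Fintype.card (Option S) < Fintype.card (Fin (l.length + 1)) := by
    rw [Fintype.card_option, Fintype.card_fin]; omega
  obtain ⟨i, j, hij, hf⟩ := Fintype.exists_ne_map_eq_of_card_lt f hc
  have key : ∀ i j : Fin (l.length + 1), i < j → f i = f j →
      Reducible (↑l : Multiset S) := by
    intro i j hij hf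
    have hf' : mSum (↑(l.take i) : Multiset S) = mSum (↑(l.take j) : Multiset S) := hf
    have hl : (↑(l.take j) + ↑(l.drop j) : Multiset S) = ↑l := by
      rw [Multiset.coe_add, List.take_append_drop]
    have hi : (i : ℕ) < j := hij
    have hj := j.isLt
    refine ⟨↑(l.take i) + ↑(l.drop j), ?_, Or.inl ?_⟩
    · have hle : (↑(l.take i) + ↑(l.drop j) : Multiset S) ≤ ↑l := by
        rw [← hl]
        refine add_le_add_left ?_ _
        exact Multiset.coe_le.2 (List.take_sublist_take_left (l := l) hi.le).subperm
      refine lt_of_le_of_ne hle ?_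
      intro h
      have := congrArg Multiset.card h
      simp only [Multiset.card_add, Multiset.coe_card, List.length_take,
        List.length_drop] at this
      omega
    · rw [mSum_add', hf', ← mSum_add', hl]
  rcases lt_or_gt_of_ne hij with h | h
  · exact key i j h hf
  · exact key j i h hf.symm

theorem absorb_rep {S : Type} [AddCommSemigroup S] (x : WithZero S) (c : S)
    (h : x = x + c) (n : ℕ) : x = x + (rep c n : S) := by
  induction n with
  | zero => exact h
  | succ n ih =>
    rw [rep, WithZero.coe_add, ← add_assoc, ← ih, ← h]

end EGZ

/-- Let `S = G ∪ N` be a finite elementary semigroup with zero element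
`z`, let `T₂` be a nonempty sequence over `N` with sum `s₂ = σ(T₂) ≠ ∞_S = z`, and let
`K = {g ∈ G : g + s₂ = s₂}` be the stabilizer of `s₂` in `G`.  Then
`D(S) ≥ |T₂| + D(G/K)`, where the Davenport constant `D(G/K)` of the quotient group `G/K`
is expressed by its classical coset characterization: the smallest `d` such that every
sequence of at least `d` elements of `G` contains a nonempty subsequence whose sum lies
in `K` (a sequence over `G/K` has zero sum iff a lift of it has sum in `K`). -/
theorem davenport_ge_card_add_davenport_quotient (S : Type) [AddCommSemigroup S] [Fintype S]
    (G N : Set S) (hel : IsElementary S G N)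
    (z : S) (hzN : z ∈ N) (hz : ∀ a : S, z + a = z)
    (T₂ : Multiset S) (hT₂ne : T₂ ≠ 0) (hT₂N : ∀ t ∈ T₂, t ∈ N)
    (s₂ : S) (hs₂ : EGZ.mSum T₂ = (s₂ : WithZero S)) (hs₂z : s₂ ≠ z)
    (K : Set S) (hK : K = {g ∈ G | g + s₂ = s₂})
    (DGK : ℕ)
    (hDGK : DGK = sInf {d : ℕ | ∀ W : Multiset S, (∀ w ∈ W, w ∈ G) →
      d ≤ Multiset.card W →
      ∃ B : Multiset S, B ≤ W ∧ B ≠ 0 ∧ ∃ k ∈ K, EGZ.mSum B = (k : WithZero S)}) :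
    Multiset.card T₂ + DGK ≤ EGZ.DavC S := by
  obtain ⟨hGN, hdis, hGG, ⟨e, heG, he, hinv⟩, hNS, ⟨z', hz'N, hz', hnil⟩⟩ := hel
  have hzz : z' = z := by rw [← hz' z, add_comm, hz]
  subst hzz
  have hnot : ∀ x, x ∈ G → x ∈ N → False := fun x h1 h2 =>
    Set.disjoint_left.1 hdis h1 h2
  have hNN : ∀ a ∈ N, ∀ b ∈ N, a + b ∈ N := fun a ha b _ => hNS a ha b
  -- the extremal sequence over `G`
  obtain ⟨W, hWG, hWc, hW⟩ : ∃ W : Multiset S, (∀ w ∈ W, w ∈ G) ∧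
      DGK ≤ Multiset.card W + 1 ∧
      ∀ B : Multiset S, B ≤ W → B ≠ 0 → ∀ k ∈ K, EGZ.mSum B ≠ (k : WithZero S) := by
    rcases Nat.eq_zero_or_pos DGK with h0 | hpos
    · refine ⟨0, by simp, by omega, ?_⟩
      intro B hB hB0
      exact absurd (le_antisymm hB (Multiset.zero_le B)) hB0
    · have hlt : DGK - 1 < sInf {d : ℕ | ∀ W : Multiset S, (∀ w ∈ W, w ∈ G) →
          d ≤ Multiset.card W →
          ∃ B : Multiset S, B ≤ W ∧ B ≠ 0 ∧ ∃ k ∈ K, EGZ.mSum B = (k : WithZero S)} := by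
        rw [← hDGK]; omega
      have hn := Nat.notMem_of_lt_sInf hlt
      simp only [Set.mem_setOf_eq, not_forall] at hn
      obtain ⟨W, hWG, hc, hn⟩ := hn
      refine ⟨W, hWG, by omega, ?_⟩
      intro B hB hB0 k hk hs
      exact hn ⟨B, hB, hB0, k, hk, hs⟩
  -- adding a sum of elements of `G` is invertible
  have hcanc : ∀ X : Multiset S, (∀ x ∈ X, x ∈ G) →
      ∃ h : S, ∀ t : S, (t : WithZero S) + EGZ.mSum X + h = t := by
    intro X hX
    rcases EGZ.mSum_mem G hGG X hX with h0 | ⟨g, hg, hs⟩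
    · subst h0
      refine ⟨e, fun t => ?_⟩
      rw [EGZ.mSum_zero', add_zero, ← WithZero.coe_add, add_comm, he]
    · obtain ⟨b, hb, hgb⟩ := hinv g hg
      refine ⟨b, fun t => ?_⟩
      rw [hs, ← WithZero.coe_add, ← WithZero.coe_add, add_assoc, hgb, add_comm, he]
  have hs₂N : s₂ ∈ N := by
    rcases EGZ.mSum_mem N hNN T₂ hT₂N with h0 | ⟨g, hg, hs⟩
    · exact absurd h0 hT₂ne
    · rw [hs₂] at hs
      rwa [WithZero.coe_inj.1 hs]
  -- adding any sequence to an element of `N` stays in `N`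
  have hNadd : ∀ a ∈ N, ∀ X : Multiset S, ∃ b ∈ N,
      (a : WithZero S) + EGZ.mSum X = (b : WithZero S) := by
    intro a ha X
    rcases EGZ.mSum_mem Set.univ (fun _ _ _ _ => Set.mem_univ _) X
      (fun _ _ => Set.mem_univ _) with h0 | ⟨g, _, hs⟩
    · subst h0
      exact ⟨a, ha, by rw [EGZ.mSum_zero', add_zero]⟩
    · exact ⟨a + g, hNS a ha g, by rw [hs, WithZero.coe_add]⟩
  have hirr : ¬ EGZ.Reducible (T₂ + W) := by
    classical
    rintro ⟨B, hBT, hE⟩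
    obtain ⟨n, hnN, hn⟩ := hNadd s₂ hs₂N W
    have hT : EGZ.mSum (T₂ + W) = (n : WithZero S) := by
      rw [EGZ.mSum_add', hs₂, hn]
    rcases hE with hE | ⟨e', he', ⟨_, h2⟩ | ⟨_, h2⟩⟩
    · obtain ⟨C₂, hC₂⟩ := Multiset.le_iff_exists_add.1
        (Multiset.inter_le_right : B ∩ T₂ ≤ T₂)
      have hB1 : B - T₂ ≤ W := by
        rw [tsub_le_iff_left]; exact hBT.le
      obtain ⟨C₁, hC₁⟩ := Multiset.le_iff_exists_add.1 hB1
      have hB : B = B ∩ T₂ + (B - T₂) := by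
        rw [add_comm]; exact (Multiset.sub_add_inter B T₂).symm
      generalize hB2 : B ∩ T₂ = B₂ at *
      generalize hB1' : B - T₂ = B₁ at *
      have hC₁G : ∀ x ∈ C₁, x ∈ G := fun x hx => hWG x (by
        rw [hC₁]; exact Multiset.mem_add.2 (Or.inr hx))
      have hB₁G : ∀ x ∈ B₁, x ∈ G := fun x hx => hWG x (by
        rw [hC₁]; exact Multiset.mem_add.2 (Or.inl hx))
      have hC₂N : ∀ x ∈ C₂, x ∈ N := fun x hx => hT₂N x (by
        rw [hC₂]; exact Multiset.mem_add.2 (Or.inr hx))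
      rcases EGZ.mSum_mem N hNN C₂ hC₂N with h0 | ⟨c, hc, hs⟩
      · -- `C₂` is empty
        subst h0
        rw [add_zero] at hC₂
        have hC₁0 : C₁ ≠ 0 := by
          rintro rfl
          rw [add_zero] at hC₁
          apply hBT.ne
          rw [hB, hC₁, hC₂]
        obtain ⟨h, hh⟩ := hcanc B₁ hB₁G
        rcases EGZ.mSum_mem G hGG C₁ hC₁G with h0 | ⟨g, hg, hs⟩
        · exact hC₁0 h0
        refine hW C₁ (by rw [hC₁]; exact Multiset.le_add_left _ _) hC₁0 g ?_ hs
        rw [hK]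
        refine ⟨hg, ?_⟩
        have h3 : (s₂ : WithZero S) + EGZ.mSum B₁ =
            ((g + s₂ : S) : WithZero S) + EGZ.mSum B₁ := by
          have := hE
          rw [hB, ← hC₂, hC₁, EGZ.mSum_add', EGZ.mSum_add', EGZ.mSum_add', hs₂, hs] at this
          rw [this, WithZero.coe_add]
          abel
        have h4 := hh s₂
        rw [h3, hh] at h4
        exact WithZero.coe_inj.1 h4
      · -- `C₂` is nonempty: the sum is forced to be the zero element
        obtain ⟨d, hdN, hd⟩ := hNadd c hc C₁
        have h3 : EGZ.mSum B = EGZ.mSum B + (d : WithZero S) := by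
          rw [← hd, ← hs]
          nth_rewrite 1 [hE]
          rw [hB, hC₂, hC₁, EGZ.mSum_add', EGZ.mSum_add', EGZ.mSum_add', EGZ.mSum_add']
          abel
        obtain ⟨m, hm⟩ := hnil d hdN
        have h4 := EGZ.absorb_rep _ d h3 m
        rw [hm, hE, hT, ← WithZero.coe_add, add_comm n, hz] at h4
        obtain ⟨h, hh⟩ := hcanc W hWG
        have h5 := hh s₂
        rw [hn, h4, ← WithZero.coe_add, hz] at h5
        exact hs₂z (WithZero.coe_inj.1 h5).symm
    · rw [hT] at h2
      have hne : n = e' := WithZero.coe_inj.1 h2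
      subst hne
      have := hNS n hnN e
      rw [he' e] at this
      exact hnot e heG this
    · rw [hT] at h2
      exact WithZero.coe_ne_zero h2
  have hne : {ℓ : ℕ | ∀ T : Multiset S, ℓ ≤ Multiset.card T → EGZ.Reducible T}.Nonempty :=
    ⟨Fintype.card S + 1, fun T hT => EGZ.reducible_of_card T hT⟩
  have hmem := Nat.sInf_mem hne
  by_contra hcon
  apply hirr
  apply hmem
  change EGZ.DavC S ≤ _
  rw [Multiset.card_add]
  omega
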